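/- arXiv:2204.00071 — 2 statements merged into one kernel-verified Lean document; each statement's English description precedes it below -/
import Mathlib

section
/- Under the structural assumptions on the gas network, the injections at the slack nodes are uniquely determined by the data: if (p, f) and (p̂, f̂) are two generalized solutions for the same data (the same resistances β, boost ratios α, slack pressures p_s, and non-slack injections q), then for every slack node i ∈ N_s, the net outflow ∑_{e : s(e)=i} f(e) − ∑_{e : t(e)=i} f(e) equals the net outflow ∑_{e : s(e)=i} f̂(e) − ∑_{e : t(e)=i} f̂(e). -/
/-! Gas network machinery: a finite directed multigraph is given by vertex and edge
types with source map `sV` and target map `tV`; an undirected step is an edge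
together with a direction of traversal. -/

/-- The vertex at which an oriented step starts. -/
def stepTail {V E : Type*} (sV tV : E → V) (st : E × Bool) : V :=
  if st.2 then sV st.1 else tV st.1

/-- The vertex at which an oriented step ends. -/
def stepHead {V E : Type*} (sV tV : E → V) (st : E × Bool) : V :=
  if st.2 then tV st.1 else sV st.1

/-- `IsWalk sV tV a l b`: the list of oriented steps `l` forms an undirected walk
from `a` to `b`. -/
def IsWalk {V E : Type*} (sV tV : E → V) : V → List (E × Bool) → V → Prop
  | a, [], b => a = b
  | a, st :: l, b => stepTail sV tV st = a ∧ IsWalk sV tV (stepHead sV tV st) l b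

/-- An undirected path: a walk in which no vertex is repeated. -/
def IsPath {V E : Type*} (sV tV : E → V) (a : V) (l : List (E × Bool)) (b : V) : Prop :=
  IsWalk sV tV a l b ∧ (a :: l.map (stepHead sV tV)).Nodup

/-- An undirected (simple) cycle based at `a`: a nonempty closed walk with no repeated
edges and no repeated vertices (other than the base point as start and end). -/
def IsCycle {V E : Type*} (sV tV : E → V) (a : V) (l : List (E × Bool)) : Prop :=
  l ≠ [] ∧ IsWalk sV tV a l a ∧ (l.map Prod.fst).Nodup ∧
    (l.map (stepHead sV tV)).Nodup

/-- A generalized solution of the gas flow problem: pressures lie in the domain `D`,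
every pipe satisfies the potential-drop equation, every compressor satisfies the
pressure-boost equation, flow balance holds at every non-slack node, and slack
pressures are attained. -/
def IsGenSol {V E : Type*} [Fintype E] [DecidableEq V]
    (sV tV : E → V) (pipe : E → Prop) (Ns : Set V)
    (β α : E → ℝ) (ps q : V → ℝ)
    (Pot : ℝ → ℝ) (D : Set ℝ) (p : V → ℝ) (f : E → ℝ) : Prop :=
  (∀ i : V, p i ∈ D) ∧
  (∀ e : E, pipe e → Pot (p (sV e)) - Pot (p (tV e)) = β e * f e * |f e|) ∧
  (∀ e : E, ¬ pipe e → p (tV e) = α e * p (sV e)) ∧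
  (∀ i : V, i ∉ Ns →
    (∑ e : E, if tV e = i then f e else 0) -
      (∑ e : E, if sV e = i then f e else 0) = q i) ∧
  (∀ i ∈ Ns, p i = ps i)

/-! Two solutions are compared by cuts. Across the boundary of the set of nodes where `p < p'`,
compressors do not pass, and every pipe carries strictly more outward flow under `f'` than under
`f`; the set contains no slack node, so the net flow through its boundary is the same for both
solutions, and hence no edge crosses it. Equality of pressures therefore spreads along edges, and
all pipes touching the compressor component of a slack node `i` carry the same flow in both
solutions. That component contains no other slack node, so conservation over it determines the
outflow at `i`. -/

theorem strictMono_mul_mul_abs {R : Type*} [CommRing R] [LinearOrder R] [IsStrictOrderedRing R]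
    {b : R} (hb : 0 < b) : StrictMono fun x : R => b * x * |x| := by
  refine strictMono_of_odd_strictMonoOn_nonneg (fun x => ?_) fun x hx y hy hxy => ?_
  · simp only [abs_neg, mul_neg, neg_mul]
  · simp only [Set.mem_Ici] at hx hy
    simp only [abs_of_nonneg hx, abs_of_nonneg hy, mul_assoc]
    gcongr

section Walk

variable {V E : Type*} {sV tV : E → V} {a b c : V} {l : List (E × Bool)}

theorem IsWalk.mem_iff {S : Set V} (hS : ∀ e, sV e ∈ S ↔ tV e ∈ S)
    (h : IsWalk sV tV a l b) : a ∈ S ↔ b ∈ S := by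
  induction l generalizing a with
  | nil => rw [show a = b from h]
  | cons st l ih =>
    obtain ⟨rfl, hl⟩ := h
    rw [← ih hl]
    rcases st with ⟨e, _ | _⟩
    · exact (hS e).symm
    · exact hS e

theorem IsPath.exists_suffix (h : IsPath sV tV c l b)
    (ha : a ∈ c :: l.map (stepHead sV tV)) : ∃ l', IsPath sV tV a l' b ∧ l' <:+ l := by
  induction l generalizing c with
  | nil =>
    obtain rfl := List.mem_singleton.1 ha
    exact ⟨[], h, List.suffix_rfl⟩
  | cons st l ih =>
    obtain rfl | ha := List.mem_cons.1 ha
    · exact ⟨st :: l, h, List.suffix_rfl⟩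
    · obtain ⟨l', hl', hsuffix⟩ := ih ⟨h.1.2, (List.nodup_cons.1 h.2).2⟩ ha
      exact ⟨l', hl', hsuffix.trans (List.suffix_cons st l)⟩

theorem IsWalk.exists_isPath_sublist (h : IsWalk sV tV a l b) :
    ∃ l', IsPath sV tV a l' b ∧ l'.Sublist l := by
  induction l generalizing a with
  | nil => exact ⟨[], ⟨h, List.nodup_singleton a⟩, List.Sublist.refl _⟩
  | cons st l ih =>
    obtain ⟨l', hl', hsub⟩ := ih h.2
    by_cases ha : a ∈ stepHead sV tV st :: l'.map (stepHead sV tV)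
    · obtain ⟨l'', hl'', hsuffix⟩ := hl'.exists_suffix ha
      exact ⟨l'', hl'', (hsuffix.sublist.trans hsub).cons st⟩
    · exact ⟨st :: l', ⟨⟨h.1, hl'.1⟩, List.nodup_cons.2 ⟨ha, hl'.2⟩⟩, hsub.cons_cons st⟩

/-- The set of nodes joined to `i` by an undirected walk all of whose edges satisfy `Q`: the
connected component of `i` in the subgraph with edge set `Q`. For the class `Q` of compressors it
is the region over which conservation of flow is summed. -/
def edgeComponent (sV tV : E → V) (Q : E → Prop) (i : V) : Set V :=
  {v | ∃ l, IsWalk sV tV v l i ∧ ∀ st ∈ l, Q st.1}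

variable {Q : E → Prop} {i : V}

theorem mem_edgeComponent_self : i ∈ edgeComponent sV tV Q i :=
  ⟨[], rfl, List.forall_mem_nil _⟩

theorem source_mem_edgeComponent_iff {e : E} (he : Q e) :
    sV e ∈ edgeComponent sV tV Q i ↔ tV e ∈ edgeComponent sV tV Q i := by
  constructor
  · rintro ⟨l, hl, hQ⟩
    exact ⟨(e, false) :: l, ⟨rfl, hl⟩, List.forall_mem_cons.2 ⟨he, hQ⟩⟩
  · rintro ⟨l, hl, hQ⟩
    exact ⟨(e, true) :: l, ⟨rfl, hl⟩, List.forall_mem_cons.2 ⟨he, hQ⟩⟩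

theorem exists_isPath_of_mem_edgeComponent (ha : a ∈ edgeComponent sV tV Q i) :
    ∃ l, IsPath sV tV a l i ∧ ∀ st ∈ l, Q st.1 := by
  obtain ⟨l, hl, hQ⟩ := ha
  obtain ⟨l', hl', hsub⟩ := hl.exists_isPath_sublist
  exact ⟨l', hl', fun st hst => hQ st (hsub.subset hst)⟩

end Walk

section NetOut

variable {V E A : Type*} [Fintype E] [DecidableEq V] [AddCommGroup A]

/-- The net outflow at the node `i` of a flow `g` on the edges: the flow leaving `i` minus the
flow entering it, so the injection of a network node is minus its net outflow. A loop contributes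
to both sums. -/
def netOut (sV tV : E → V) (g : E → A) (i : V) : A :=
  (∑ e, if sV e = i then g e else 0) - ∑ e, if tV e = i then g e else 0

variable {sV tV : E → V} {S : Set V}

theorem netOut_sub (g h : E → A) (i : V) :
    netOut sV tV (g - h) i = netOut sV tV g i - netOut sV tV h i := by
  simp only [netOut, ← Finset.sum_filter, Pi.sub_apply, Finset.sum_sub_distrib]
  abel

theorem hasFiniteSupport_sum_fiber (r : E → V) (g : E → A) :
    Function.HasFiniteSupport fun v => ∑ e with r e = v, g e := by
  refine (Set.finite_range r).subset fun v hv => ?_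
  obtain ⟨e, he, -⟩ := Finset.exists_ne_zero_of_sum_ne_zero hv
  exact ⟨e, (Finset.mem_filter.1 he).2⟩

theorem indicator_netOut (g : E → A) (v : V) :
    S.indicator (netOut sV tV g) v =
      (∑ e with sV e = v, S.indicator (fun _ => g e) (sV e)) -
        ∑ e with tV e = v, S.indicator (fun _ => g e) (tV e) := by
  have hfiber (r : E → V) : (∑ e with r e = v, S.indicator (fun _ => g e) (r e)) =
      ∑ e with r e = v, S.indicator (fun _ => g e) v :=
    Finset.sum_congr rfl fun e he => by rw [(Finset.mem_filter.1 he).2]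
  rw [hfiber, hfiber]
  by_cases hv : v ∈ S <;> simp [hv, netOut, Finset.sum_filter]

theorem finsum_mem_netOut (g : E → A) (S : Set V) :
    ∑ᶠ v ∈ S, netOut sV tV g v =
      ∑ e, (S.indicator (fun _ => g e) (sV e) - S.indicator (fun _ => g e) (tV e)) := by
  simp only [finsum_mem_def, indicator_netOut]
  rw [finsum_sub_distrib (hasFiniteSupport_sum_fiber _ _) (hasFiniteSupport_sum_fiber _ _),
    finsum_sum_filter, finsum_sum_filter, Finset.sum_sub_distrib]

theorem netOut_eq_zero_of_forall_ne {g : E → A} {i : V} (hi : i ∈ S)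
    (hzero : ∀ v ∈ S, v ≠ i → netOut sV tV g v = 0)
    (hcut : ∀ e, g e ≠ 0 → (sV e ∈ S ↔ tV e ∈ S)) : netOut sV tV g i = 0 := by
  classical
  calc netOut sV tV g i = ∑ᶠ v ∈ S, netOut sV tV g v := by
        rw [finsum_mem_def, finsum_eq_single _ i, Set.indicator_of_mem hi]
        exact fun v hvi => Set.indicator_apply_eq_zero.2 fun hv => hzero v hv hvi
    _ = ∑ e, (S.indicator (fun _ => g e) (sV e) - S.indicator (fun _ => g e) (tV e)) :=
        finsum_mem_netOut g S
    _ = 0 := Finset.sum_eq_zero fun e _ => by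
        by_cases he : g e = 0
        · simp [he]
        · simp [Set.indicator_apply, hcut e he]

theorem source_mem_iff_target_mem_of_netOut_eq_zero [PartialOrder A] [IsOrderedAddMonoid A]
    {g : E → A} (hzero : ∀ v ∈ S, netOut sV tV g v = 0)
    (hout : ∀ e, sV e ∈ S → tV e ∉ S → 0 < g e)
    (hin : ∀ e, sV e ∉ S → tV e ∈ S → g e < 0) (e : E) : sV e ∈ S ↔ tV e ∈ S := by
  classical
  let cutFlow (e : E) : A := S.indicator (fun _ => g e) (sV e) - S.indicator (fun _ => g e) (tV e)
  have hpos (e : E) (he : ¬(sV e ∈ S ↔ tV e ∈ S)) : 0 < cutFlow e := by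
    by_cases hs : sV e ∈ S <;> by_cases ht : tV e ∈ S
    · exact absurd (iff_of_true hs ht) he
    · simpa [cutFlow, hs, ht] using hout e hs ht
    · simpa [cutFlow, hs, ht] using hin e hs ht
    · exact absurd (iff_of_false hs ht) he
  have hnonneg (e : E) : 0 ≤ cutFlow e := by
    by_cases he : sV e ∈ S ↔ tV e ∈ S
    · simp [cutFlow, Set.indicator_apply, he]
    · exact (hpos e he).le
  have hsum : ∑ e, cutFlow e = 0 :=
    (finsum_mem_netOut g S).symm.trans (finsum_mem_eq_zero_of_forall_eq_zero hzero)
  by_contra he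
  exact (hpos e he).ne' (congrFun ((Fintype.sum_eq_zero_iff_of_nonneg hnonneg).1 hsum) e)

end NetOut

namespace IsGenSol

variable {V E : Type*} [Fintype E] [DecidableEq V] {sV tV : E → V} {pipe : E → Prop} {Ns : Set V}
  {β α : E → ℝ} {ps q : V → ℝ} {Pot : ℝ → ℝ} {D : Set ℝ} {p p' : V → ℝ} {f f' : E → ℝ}

theorem pressure_eq_of_mem_slack (h : IsGenSol sV tV pipe Ns β α ps q Pot D p f)
    (h' : IsGenSol sV tV pipe Ns β α ps q Pot D p' f') {i : V} (hi : i ∈ Ns) : p i = p' i := by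
  obtain ⟨-, -, -, -, hslack⟩ := h
  obtain ⟨-, -, -, -, hslack'⟩ := h'
  rw [hslack i hi, hslack' i hi]

theorem netOut_sub_eq_zero (h : IsGenSol sV tV pipe Ns β α ps q Pot D p f)
    (h' : IsGenSol sV tV pipe Ns β α ps q Pot D p' f') {i : V} (hi : i ∉ Ns) :
    netOut sV tV (f' - f) i = 0 := by
  obtain ⟨-, -, -, hbal, -⟩ := h
  obtain ⟨-, -, -, hbal', -⟩ := h'
  rw [netOut_sub, netOut, netOut]
  linarith [hbal i hi, hbal' i hi]

theorem compressor_pressure_lt_iff (h : IsGenSol sV tV pipe Ns β α ps q Pot D p f)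
    (h' : IsGenSol sV tV pipe Ns β α ps q Pot D p' f') {e : E} (he : ¬ pipe e) (hα : 0 < α e) :
    p (sV e) < p' (sV e) ↔ p (tV e) < p' (tV e) := by
  obtain ⟨-, -, hboost, -, -⟩ := h
  obtain ⟨-, -, hboost', -, -⟩ := h'
  rw [hboost e he, hboost' e he, mul_lt_mul_iff_right₀ hα]

theorem pipe_flow_lt_iff (h : IsGenSol sV tV pipe Ns β α ps q Pot D p f)
    (h' : IsGenSol sV tV pipe Ns β α ps q Pot D p' f') {e : E} (he : pipe e) (hβ : 0 < β e) :
    f e < f' e ↔ Pot (p (sV e)) - Pot (p (tV e)) < Pot (p' (sV e)) - Pot (p' (tV e)) := by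
  obtain ⟨-, hdrop, -, -, -⟩ := h
  obtain ⟨-, hdrop', -, -, -⟩ := h'
  rw [hdrop e he, hdrop' e he]
  exact (strictMono_mul_mul_abs hβ).lt_iff_lt.symm

theorem pipe_flow_eq (h : IsGenSol sV tV pipe Ns β α ps q Pot D p f)
    (h' : IsGenSol sV tV pipe Ns β α ps q Pot D p' f') {e : E} (he : pipe e) (hβ : 0 < β e)
    (hs : p (sV e) = p' (sV e)) (ht : p (tV e) = p' (tV e)) : f e = f' e := by
  obtain ⟨-, hdrop, -, -, -⟩ := h
  obtain ⟨-, hdrop', -, -, -⟩ := h'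
  refine (strictMono_mul_mul_abs hβ).injective ?_
  rw [← hdrop e he, ← hdrop' e he, hs, ht]

theorem flow_lt_of_source_lt_of_target_le (hPot : StrictMonoOn Pot D) (hβ : ∀ e, pipe e → 0 < β e)
    (hα : ∀ e, ¬ pipe e → 0 < α e) (h : IsGenSol sV tV pipe Ns β α ps q Pot D p f)
    (h' : IsGenSol sV tV pipe Ns β α ps q Pot D p' f') {e : E}
    (hs : p (sV e) < p' (sV e)) (ht : p' (tV e) ≤ p (tV e)) : f e < f' e := by
  by_cases he : pipe e
  · rw [pipe_flow_lt_iff h h' he (hβ e he)]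
    linarith [hPot (h.1 _) (h'.1 _) hs, hPot.monotoneOn (h'.1 _) (h.1 _) ht]
  · exact absurd ((compressor_pressure_lt_iff h h' he (hα e he)).1 hs) ht.not_gt

theorem flow_lt_of_source_le_of_target_lt (hPot : StrictMonoOn Pot D) (hβ : ∀ e, pipe e → 0 < β e)
    (hα : ∀ e, ¬ pipe e → 0 < α e) (h : IsGenSol sV tV pipe Ns β α ps q Pot D p f)
    (h' : IsGenSol sV tV pipe Ns β α ps q Pot D p' f') {e : E}
    (hs : p (sV e) ≤ p' (sV e)) (ht : p' (tV e) < p (tV e)) : f e < f' e := by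
  by_cases he : pipe e
  · rw [pipe_flow_lt_iff h h' he (hβ e he)]
    linarith [hPot.monotoneOn (h.1 _) (h'.1 _) hs, hPot (h'.1 _) (h.1 _) ht]
  · exact absurd ((compressor_pressure_lt_iff h' h he (hα e he)).2 ht) hs.not_gt

theorem pressure_lt_iff (hPot : StrictMonoOn Pot D) (hβ : ∀ e, pipe e → 0 < β e)
    (hα : ∀ e, ¬ pipe e → 0 < α e) (h : IsGenSol sV tV pipe Ns β α ps q Pot D p f)
    (h' : IsGenSol sV tV pipe Ns β α ps q Pot D p' f') (e : E) :
    p (sV e) < p' (sV e) ↔ p (tV e) < p' (tV e) := by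
  refine source_mem_iff_target_mem_of_netOut_eq_zero (S := {v | p v < p' v}) (g := f' - f)
    (fun v hv => ?_) (fun e hs ht => ?_) (fun e hs ht => ?_) e
  · exact netOut_sub_eq_zero h h' fun hslack => hv.ne (pressure_eq_of_mem_slack h h' hslack)
  · exact sub_pos.2 (flow_lt_of_source_lt_of_target_le hPot hβ hα h h' hs (not_lt.1 ht))
  · exact sub_neg.2 (flow_lt_of_source_le_of_target_lt hPot hβ hα h' h (not_lt.1 hs) ht)

theorem pressure_eq_iff (hPot : StrictMonoOn Pot D) (hβ : ∀ e, pipe e → 0 < β e)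
    (hα : ∀ e, ¬ pipe e → 0 < α e) (h : IsGenSol sV tV pipe Ns β α ps q Pot D p f)
    (h' : IsGenSol sV tV pipe Ns β α ps q Pot D p' f') (e : E) :
    p (sV e) = p' (sV e) ↔ p (tV e) = p' (tV e) := by
  simp only [le_antisymm_iff, ← not_lt, pressure_lt_iff hPot hβ hα h h' e,
    pressure_lt_iff hPot hβ hα h' h e]

end IsGenSol

theorem slack_injections_unique_general {V E : Type*} [Fintype E] [DecidableEq V]
    {sV tV : E → V} {pipe : E → Prop} {Ns : Set V} {β α : E → ℝ} {ps q : V → ℝ} {Pot : ℝ → ℝ}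
    {D : Set ℝ} (hPot : StrictMonoOn Pot D) (hβ : ∀ e, pipe e → 0 < β e)
    (hα : ∀ e, ¬ pipe e → 0 < α e) {p p' : V → ℝ} {f f' : E → ℝ}
    (h : IsGenSol sV tV pipe Ns β α ps q Pot D p f)
    (h' : IsGenSol sV tV pipe Ns β α ps q Pot D p' f') {i : V} (hi : i ∈ Ns)
    (hpath : ∀ a ∈ Ns, a ≠ i → ∀ l, IsPath sV tV a l i → ∃ st ∈ l, pipe st.1) :
    netOut sV tV f i = netOut sV tV f' i := by
  let K := edgeComponent sV tV (fun e => ¬ pipe e) i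
  have hedge := IsGenSol.pressure_eq_iff hPot hβ hα h h'
  have hpressure (v : V) (hv : v ∈ K) : p v = p' v := by
    obtain ⟨l, hl, -⟩ := hv
    exact (hl.mem_iff (S := {v | p v = p' v}) hedge).2 (h.pressure_eq_of_mem_slack h' hi)
  have hflow (e : E) (he : pipe e) (heK : sV e ∈ K ∨ tV e ∈ K) : f e = f' e := by
    have hs : p (sV e) = p' (sV e) :=
      heK.elim (hpressure _) fun ht => (hedge e).2 (hpressure _ ht)
    exact h.pipe_flow_eq h' he (hβ e he) hs ((hedge e).1 hs)
  have hslack (v : V) (hv : v ∈ K) (hvi : v ≠ i) : v ∉ Ns := fun hvN => by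
    obtain ⟨l, hl, hcompressor⟩ := exists_isPath_of_mem_edgeComponent hv
    obtain ⟨st, hst, hpipe⟩ := hpath v hvN hvi l hl
    exact hcompressor st hst hpipe
  have hdiff : netOut sV tV (f' - f) i = 0 := by
    refine netOut_eq_zero_of_forall_ne (S := K) mem_edgeComponent_self
      (fun v hv hvi => h.netOut_sub_eq_zero h' (hslack v hv hvi)) fun e he => ?_
    by_cases hpipe : pipe e
    · have hK := mt (hflow e hpipe) fun heq => he (sub_eq_zero.2 heq.symm)
      exact iff_of_false (hK ∘ Or.inl) (hK ∘ Or.inr)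
    · exact source_mem_edgeComponent_iff hpipe
  rw [netOut_sub, sub_eq_zero] at hdiff
  exact hdiff.symm

/-- Uniqueness of generalized solutions to the gas flow problem: on a connected gas
network in which every path joining two distinct slack nodes contains a pipe and every
cycle contains a pipe, with positive pipe resistances, positive compressor boost
ratios, a nonempty set of slack nodes, and a potential `Pot` strictly increasing on
the pressure domain `D`, the net outflow at each slack node (i.e. the slack-node
injection) is the same for any two generalized solutions of the same data. -/
theorem slack_injections_unique
    {V E : Type*} [Fintype V] [Fintype E] [DecidableEq V] [DecidableEq E]
    (sV tV : E → V) (pipe : E → Prop) (Ns : Set V)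
    (β α : E → ℝ) (ps q : V → ℝ) (Pot : ℝ → ℝ) (D : Set ℝ)
    (hmono : ∀ x ∈ D, ∀ y ∈ D, x < y → Pot x < Pot y)
    (hNs : Ns.Nonempty)
    (hβ : ∀ e, pipe e → 0 < β e)
    (hα : ∀ e, ¬ pipe e → 0 < α e)
    (hconn : ∀ a b : V, ∃ l, IsWalk sV tV a l b)
    (hslackpath : ∀ a ∈ Ns, ∀ b ∈ Ns, a ≠ b →
      ∀ l, IsPath sV tV a l b → ∃ st ∈ l, pipe st.1)
    (hcyclepipe : ∀ (a : V) (l : List (E × Bool)),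
      IsCycle sV tV a l → ∃ st ∈ l, pipe st.1)
    (p f p' f')
    (hsol : IsGenSol sV tV pipe Ns β α ps q Pot D p f)
    (hsol' : IsGenSol sV tV pipe Ns β α ps q Pot D p' f') :
    ∀ i ∈ Ns,
      (∑ e : E, if sV e = i then f e else 0) -
        (∑ e : E, if tV e = i then f e else 0) =
      (∑ e : E, if sV e = i then f' e else 0) -
        (∑ e : E, if tV e = i then f' e else 0) := fun i hi =>
  slack_injections_unique_general (fun x hx y hy => hmono x hx y hy) hβ hα hsol hsol' hi
    fun a ha hai => hslackpath a ha i hi hai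
end

section
/- Let b₁ > 0 and b₂ > 0 and define the CNGA potential Π(p) = (b₁/2)·p² + (b₂/3)·p³. Then Π is strictly increasing on the set S₂ = {p ∈ ℝ : p ≤ −b₁/b₂} ∪ {p ∈ ℝ : p > b₁/(2b₂)}: for all p, p̂ ∈ S₂ with p < p̂, one has Π(p) < Π(p̂). -/
/-!
For `b₁ ≥ 0` and `b₂ > 0` the potential is strictly increasing on `[0, ∞)`. The graph of a cubic is
symmetric about its inflection point, here at `-b₁ / (2 * b₂)`, and the reflection
`p ↦ -b₁ / b₂ - p` carries this monotonicity over to `(-∞, -b₁ / b₂]`. The two branches are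
compatible because the value at `-b₁ / b₂`, the largest on the left branch, is taken again at
`b₁ / (2 * b₂)`.
-/

open Set

/-- The CNGA potential `Π`: the antiderivative, vanishing at `0`, of the density
`ρ(p) = b₁ p + b₂ p²`. It is written out as a polynomial, so that no calculus is needed and
the scalars may be any ordered field. -/
def cngaPotential {𝕜 : Type*} [Field 𝕜] (b₁ b₂ p : 𝕜) : 𝕜 :=
  b₁ / 2 * p ^ 2 + b₂ / 3 * p ^ 3

section CharZero

variable {𝕜 : Type*} [Field 𝕜] [CharZero 𝕜] {b₂ : 𝕜}

theorem cngaPotential_reflect (b₁ : 𝕜) (hb₂ : b₂ ≠ 0) (p : 𝕜) :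
    cngaPotential b₁ b₂ (-b₁ / b₂ - p) = b₁ ^ 3 / (6 * b₂ ^ 2) - cngaPotential b₁ b₂ p := by
  unfold cngaPotential
  field_simp
  ring

theorem cngaPotential_neg_div_eq_div_two_mul (b₁ : 𝕜) (hb₂ : b₂ ≠ 0) :
    cngaPotential b₁ b₂ (-b₁ / b₂) = cngaPotential b₁ b₂ (b₁ / (2 * b₂)) := by
  unfold cngaPotential
  field_simp
  ring

end CharZero

section LinearOrder

variable {𝕜 : Type*} [Field 𝕜] [LinearOrder 𝕜] [IsStrictOrderedRing 𝕜] {b₁ b₂ p q : 𝕜}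

theorem strictMonoOn_cngaPotential_Ici (hb₁ : 0 ≤ b₁) (hb₂ : 0 < b₂) :
    StrictMonoOn (cngaPotential b₁ b₂) (Ici 0) := by
  intro p (hp : 0 ≤ p) q _ hpq
  have quadratic_le : b₁ / 2 * p ^ 2 ≤ b₁ / 2 * q ^ 2 := by gcongr
  have cubic_lt : b₂ / 3 * p ^ 3 < b₂ / 3 * q ^ 3 := by gcongr
  exact add_lt_add_of_le_of_lt quadratic_le cubic_lt

theorem strictMonoOn_cngaPotential_Iic (hb₁ : 0 ≤ b₁) (hb₂ : 0 < b₂) :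
    StrictMonoOn (cngaPotential b₁ b₂) (Iic (-b₁ / b₂)) := by
  intro p hp q hq hpq
  have reflect_lt :
      cngaPotential b₁ b₂ (-b₁ / b₂ - q) < cngaPotential b₁ b₂ (-b₁ / b₂ - p) :=
    strictMonoOn_cngaPotential_Ici hb₁ hb₂ (sub_nonneg.2 hq) (sub_nonneg.2 hp)
      (sub_lt_sub_left hpq _)
  rw [cngaPotential_reflect b₁ hb₂.ne', cngaPotential_reflect b₁ hb₂.ne'] at reflect_lt
  exact (sub_lt_sub_iff_left _).1 reflect_lt

theorem cngaPotential_lt_of_le_neg_div_of_div_two_mul_lt (hb₁ : 0 ≤ b₁) (hb₂ : 0 < b₂)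
    (hp : p ≤ -b₁ / b₂) (hq : b₁ / (2 * b₂) < q) :
    cngaPotential b₁ b₂ p < cngaPotential b₁ b₂ q := by
  have h_nonneg : 0 ≤ b₁ / (2 * b₂) := by positivity
  calc
    cngaPotential b₁ b₂ p ≤ cngaPotential b₁ b₂ (-b₁ / b₂) :=
      (strictMonoOn_cngaPotential_Iic hb₁ hb₂).monotoneOn hp self_mem_Iic hp
    _ = cngaPotential b₁ b₂ (b₁ / (2 * b₂)) := cngaPotential_neg_div_eq_div_two_mul b₁ hb₂.ne'
    _ < cngaPotential b₁ b₂ q :=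
      strictMonoOn_cngaPotential_Ici hb₁ hb₂ h_nonneg (h_nonneg.trans hq.le) hq

theorem cnga_potential_strictMono_on_S2_general (hb₁ : 0 ≤ b₁) (hb₂ : 0 < b₂) :
    StrictMonoOn (cngaPotential b₁ b₂) (Iic (-b₁ / b₂) ∪ Ioi (b₁ / (2 * b₂))) := by
  have h_nonneg : 0 ≤ b₁ / (2 * b₂) := by positivity
  have h_nonpos : -b₁ / b₂ ≤ 0 := div_nonpos_of_nonpos_of_nonneg (neg_nonpos.2 hb₁) hb₂.le
  have Ioi_subset : Ioi (b₁ / (2 * b₂)) ⊆ Ici 0 := fun _ hp ↦ h_nonneg.trans (le_of_lt hp)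
  rintro p (hp | hp) q (hq | hq) hpq
  · exact strictMonoOn_cngaPotential_Iic hb₁ hb₂ hp hq hpq
  · exact cngaPotential_lt_of_le_neg_div_of_div_two_mul_lt hb₁ hb₂ hp hq
  · exact absurd hpq ((hq.trans h_nonpos).trans (Ioi_subset hp)).not_gt
  · exact (strictMonoOn_cngaPotential_Ici hb₁ hb₂).mono Ioi_subset hp hq hpq

end LinearOrder

/-- The CNGA potential `Π(p) = (b₁/2)p² + (b₂/3)p³` (with `b₁, b₂ > 0`) is strictly
increasing on the set `S₂ = {p : p ≤ -b₁/b₂} ∪ {p : p > b₁/(2b₂)}`. -/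
theorem cnga_potential_strictMono_on_S2
    (b₁ b₂ : ℝ) (hb₁ : 0 < b₁) (hb₂ : 0 < b₂) :
    ∀ p ∈ {p : ℝ | p ≤ -b₁ / b₂} ∪ {p : ℝ | b₁ / (2 * b₂) < p},
      ∀ p' ∈ {p : ℝ | p ≤ -b₁ / b₂} ∪ {p : ℝ | b₁ / (2 * b₂) < p},
        p < p' →
          b₁ / 2 * p ^ 2 + b₂ / 3 * p ^ 3 < b₁ / 2 * p' ^ 2 + b₂ / 3 * p' ^ 3 := by
  exact fun _ hp _ hp' hlt ↦ cnga_potential_strictMono_on_S2_general hb₁.le hb₂ hp hp' hlt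
end
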